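/- arXiv:2201.08632 — 2 statements merged into one kernel-verified Lean document; each statement's English description precedes it below -/
import Mathlib

section
/- Let q be a prime power and let ν, m₁, m₂, t be positive integers with ν > m₁ ≥ t, ν > m₂ ≥ t, and 2ν ≥ 2m₁ + m₂ − t. Suppose ℱ ⊆ 𝒫_{m₁} and 𝒢 ⊆ 𝒫_{m₂} are nonempty cross t-intersecting families. Then |ℱ| ≤ [τ_t(ℱ) choose t]_q · [m₂−t+1 choose 1]_q^{τ_t(𝒢)−t} · N'(τ_t(𝒢);m₁;2ν). -/
open Finset Module

noncomputable section

/-- Gaussian binomial coefficient `[n choose k]_q` as a rational number. -/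
def gaussBinom (q n k : ℕ) : ℚ :=
  ∏ i ∈ Finset.range k, ((q : ℚ) ^ ((n : ℤ) - i) - 1) / ((q : ℚ) ^ ((k : ℤ) - i) - 1)

/-- `N'(a; m; 2ν)`, the number of `m`-dim totally isotropic subspaces containing
a fixed `a`-dim one. -/
def Nprime (q a m ν : ℕ) : ℚ :=
  ∏ i ∈ Finset.Icc 1 (m - a), ((q : ℚ) ^ (2 * ((ν : ℤ) - m + i)) - 1) / ((q : ℚ) ^ (i : ℤ) - 1)

variable {K V : Type*} [Field K] [AddCommGroup V] [Module K V]

/-- A subspace is totally isotropic w.r.t. the bilinear form `f`. -/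
def TotallyIsotropic (f : V →ₗ[K] V →ₗ[K] K) (W : Submodule K V) : Prop :=
  ∀ x ∈ W, ∀ y ∈ W, f x y = 0

/-- `polar f m` = `𝒫_m`, the set of `m`-dimensional totally isotropic subspaces. -/
def polar (f : V →ₗ[K] V →ₗ[K] K) (m : ℕ) : Set (Submodule K V) :=
  {W | TotallyIsotropic f W ∧ finrank K W = m}

/-- `X` is a `t`-cover of the family `ℱ`. -/
def IsTCover (f : V →ₗ[K] V →ₗ[K] K) (t : ℕ) (ℱ : Set (Submodule K V))
    (X : Submodule K V) : Prop :=
  TotallyIsotropic f X ∧ ∀ F ∈ ℱ, t ≤ finrank K ↥(X ⊓ F)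

/-- `τ_t(ℱ)`, the minimum dimension of a `t`-cover of `ℱ`. -/
def tauCover (f : V →ₗ[K] V →ₗ[K] K) (t : ℕ) (ℱ : Set (Submodule K V)) : ℕ :=
  sInf {x | ∃ X, IsTCover f t ℱ X ∧ finrank K ↥X = x}

def C1 (f : V →ₗ[K] V →ₗ[K] K) (M T : Submodule K V) (m t : ℕ) : Set (Submodule K V) :=
  {F | F ∈ polar f m ∧ T ≤ F ∧ t + 1 ≤ finrank K ↥(F ⊓ M)}

def C2 (f : V →ₗ[K] V →ₗ[K] K) (M T : Submodule K V) (m : ℕ) : Set (Submodule K V) :=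
  {F | F ∈ polar f m ∧ T ≤ F} ∪ {F | F ∈ polar f m ∧ F ≤ M}

def C3 (f : V →ₗ[K] V →ₗ[K] K) (S : Submodule K V) (m : ℕ) : Set (Submodule K V) :=
  {F | F ∈ polar f m ∧ S ≤ F}

def C4 (f : V →ₗ[K] V →ₗ[K] K) (S : Submodule K V) (m t : ℕ) : Set (Submodule K V) :=
  {F | F ∈ polar f m ∧ t ≤ finrank K ↥(F ⊓ S)}

def s0 (q ν m s t : ℕ) : ℚ :=
  gaussBinom q (s - t) 1 * Nprime q (t + 1) m ν - q * gaussBinom q (s - t) 2 * Nprime q (t + 2) m ν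


theorem aux_count {K V : Type*} [Field K] [Fintype K] [AddCommGroup V] [Module K V] [Finite V]
    (A : Finset (Submodule K V)) (S W : Submodule K V) (t : ℕ) (M : ℚ)
    (hS : ∀ F ∈ A, S ≤ F) (ht : ∀ F ∈ A, t ≤ finrank K ↥(F ⊓ W))
    (hM : ∀ v ∈ W, v ∉ S → ∀ B : Finset (Submodule K V), (∀ F ∈ B, F ∈ A ∧ v ∈ F) →
      (B.card : ℚ) ≤ M) :
    (A.card : ℚ) * ((Fintype.card K : ℚ) ^ t - (Fintype.card K : ℚ) ^ finrank K ↥(S ⊓ W)) ≤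
      ((Fintype.card K : ℚ) ^ finrank K W - (Fintype.card K : ℚ) ^ finrank K ↥(S ⊓ W)) * M := by
  classical
  have := Fintype.ofFinite V
  have hcard : ∀ U : Submodule K V, ((Finset.univ.filter (fun v => v ∈ U)).card : ℚ)
      = (Fintype.card K : ℚ) ^ finrank K U := by
    intro U
    have h := Module.card_eq_pow_finrank (K := K) (V := U)
    rw [← Fintype.card_subtype]
    exact_mod_cast h
  have hdiff : ∀ U : Submodule K V, S ⊓ W ≤ U → U ≤ W →
      ((Finset.univ.filter (fun v => v ∈ U ∧ v ∉ S)).card : ℚ)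
      = (Fintype.card K : ℚ) ^ finrank K U - (Fintype.card K : ℚ) ^ finrank K ↥(S ⊓ W) := by
    intro U h1 h2
    rw [← hcard, ← hcard]
    have : (Finset.univ.filter (fun v => v ∈ U)).card =
        (Finset.univ.filter (fun v => v ∈ U ∧ v ∉ S)).card +
        (Finset.univ.filter (fun v => v ∈ S ⊓ W)).card := by
      rw [← Finset.card_union_of_disjoint]
      · congr 1
        ext v
        simp only [Finset.mem_filter, Finset.mem_univ, true_and, Finset.mem_union, Submodule.mem_inf]
        constructor
        · intro h
          by_cases hs : v ∈ S
          · exact Or.inr ⟨hs, h2 h⟩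
          · exact Or.inl ⟨h, hs⟩
        · rintro (h | h)
          · exact h.1
          · exact h1 (Submodule.mem_inf.2 h)
      · rw [Finset.disjoint_left]
        intro v
        simp only [Finset.mem_filter, Finset.mem_univ, true_and, Submodule.mem_inf]
        tauto
    rw [this]; push_cast; ring
  have hq1 : (1 : ℚ) ≤ Fintype.card K := by
    exact_mod_cast Fintype.card_pos
  have key : ∑ F ∈ A, ((Finset.univ.filter (fun v => v ∈ F ⊓ W ∧ v ∉ S)).card : ℚ)
      = ∑ v ∈ Finset.univ.filter (fun v => v ∈ W ∧ v ∉ S),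
        ((A.filter (fun F => v ∈ F)).card : ℚ) := by
    simp only [Finset.card_filter, Finset.sum_filter]
    push_cast
    rw [Finset.sum_comm]
    refine Finset.sum_congr rfl fun v _ => ?_
    by_cases h : v ∈ W ∧ v ∉ S
    · rw [if_pos h]
      refine Finset.sum_congr rfl fun F _ => ?_
      simp [Submodule.mem_inf, h.1, h.2]
    · rw [if_neg h]
      refine Finset.sum_eq_zero fun F _ => ?_
      rw [if_neg]
      rw [Submodule.mem_inf]
      tauto
  calc _ = ∑ F ∈ A, ((Fintype.card K : ℚ) ^ t - (Fintype.card K : ℚ) ^ finrank K ↥(S ⊓ W)) := by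
        rw [Finset.sum_const, nsmul_eq_mul]
    _ ≤ ∑ F ∈ A, ((Finset.univ.filter (fun v => v ∈ F ⊓ W ∧ v ∉ S)).card : ℚ) := by
        refine Finset.sum_le_sum fun F hF => ?_
        rw [hdiff (F ⊓ W) (inf_le_inf_right W (hS F hF)) inf_le_right]
        have := pow_le_pow_right₀ hq1 (ht F hF)
        linarith
    _ = _ := key
    _ ≤ ∑ v ∈ Finset.univ.filter (fun v => v ∈ W ∧ v ∉ S), M := by
        refine Finset.sum_le_sum fun v hv => ?_
        simp only [Finset.mem_filter, Finset.mem_univ, true_and] at hv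
        exact hM v hv.1 hv.2 _ (fun F hF => by simpa using hF)
    _ = _ := by
        rw [Finset.sum_const, nsmul_eq_mul, hdiff W inf_le_right le_rfl]

theorem aux_sup {K V : Type*} [Field K] [AddCommGroup V] [Module K V] [FiniteDimensional K V]
    (S : Submodule K V) (v : V) (hv : v ∉ S) :
    finrank K ↥(S ⊔ K ∙ v) = finrank K S + 1 := by
  have hv0 : v ≠ 0 := fun h => hv (h ▸ S.zero_mem)
  have h := Submodule.finrank_sup_add_finrank_inf_eq S (K ∙ v)
  have h2 : S ⊓ K ∙ v = ⊥ := by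
    rw [← disjoint_iff]
    exact (Submodule.disjoint_span_singleton' hv0).2 hv
  rw [h2, finrank_bot, finrank_span_singleton hv0] at h
  omega

theorem aux_ratio (q x y : ℚ) (a b c : ℕ) (hq : 1 < q) (hca : c ≤ a) (hcb : c < b)
    (h : x * (q ^ b - q ^ c) ≤ (q ^ a - q ^ c) * y) :
    x ≤ (q ^ (a - c) - 1) / (q ^ (b - c) - 1) * y := by
  have h1 : q ^ b = q ^ c * q ^ (b - c) := by rw [← pow_add]; congr 1; omega
  have h2 : q ^ a = q ^ c * q ^ (a - c) := by rw [← pow_add]; congr 1; omega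
  have h3 : 0 < q ^ c := by positivity
  have h4 : 1 < q ^ (b - c) := one_lt_pow₀ hq (by omega)
  rw [h1, h2] at h
  rw [div_mul_eq_mul_div, le_div_iff₀ (by linarith)]
  refine le_of_mul_le_mul_left ?_ h3
  linarith

theorem aux_g1 (q n : ℕ) : gaussBinom q n 1 = ((q : ℚ) ^ n - 1) / (q - 1) := by
  simp [gaussBinom]

theorem aux_gs (q n d : ℕ) : gaussBinom q (n + 1) (d + 1) =
    ((q : ℚ) ^ (n + 1) - 1) / ((q : ℚ) ^ (d + 1) - 1) * gaussBinom q n d := by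
  unfold gaussBinom
  rw [Finset.prod_range_succ', mul_comm]
  congr 1
  · refine Finset.prod_congr rfl fun i _ => ?_
    rw [show (((n + 1 : ℕ) : ℤ) - ((i + 1 : ℕ) : ℤ)) = (n : ℤ) - i by push_cast; ring,
      show (((d + 1 : ℕ) : ℤ) - ((i + 1 : ℕ) : ℤ)) = (d : ℤ) - i by push_cast; ring]

theorem aux_Ns (q a m ν : ℕ) (h : a < m) (hm : m ≤ ν) : Nprime q a m ν =
    ((q : ℚ) ^ (2 * (ν - a)) - 1) / ((q : ℚ) ^ (m - a) - 1) * Nprime q (a + 1) m ν := by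
  unfold Nprime
  obtain ⟨d, rfl⟩ : ∃ d, m = a + 1 + d := ⟨m - a - 1, by omega⟩
  have e1 : a + 1 + d - a = d + 1 := by omega
  have e2 : a + 1 + d - (a + 1) = d := by omega
  rw [e1, e2, Finset.prod_Icc_succ_top (by omega), mul_comm]
  congr 3
  · rw [← zpow_natCast]
    congr 1
    push_cast [Nat.cast_sub (show a ≤ ν by omega)]
    ring

theorem aux_N {K V : Type*} [Field K] [Fintype K] [AddCommGroup V] [Module K V] [Finite V]
    (ν m : ℕ) (hV : finrank K V = 2 * ν) (hm : m ≤ ν) (f : V →ₗ[K] V →ₗ[K] K)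
    (halt : ∀ v, f v v = 0) (hnd : ∀ v, (∀ w, f v w = 0) → v = 0) (d : ℕ) :
    ∀ (S : Submodule K V) (A : Finset (Submodule K V)), finrank K S + d = m →
      (∀ F ∈ A, F ∈ polar f m ∧ S ≤ F) →
      (A.card : ℚ) ≤ Nprime (Fintype.card K) (finrank K S) m ν := by
  have : FiniteDimensional K V := Module.Finite.of_finite
  induction d with
  | zero =>
    intro S A hd hA
    have h1 : Nprime (Fintype.card K) (finrank K S) m ν = 1 := by
      unfold Nprime
      rw [show m - finrank K S = 0 by omega]; simp
    rw [h1]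
    have : A.card ≤ 1 := by
      rw [Finset.card_le_one]
      have : ∀ F ∈ A, S = F := fun F hF =>
        Submodule.eq_of_le_of_finrank_eq (hA F hF).2 (by rw [(hA F hF).1.2]; omega)
      intro F hF G hG
      rw [← this F hF, ← this G hG]
    exact_mod_cast this
  | succ d ih =>
    intro S A hd hA
    have hq : (1 : ℚ) < Fintype.card K := by exact_mod_cast Fintype.one_lt_card
    rcases A.eq_empty_or_nonempty with rfl | ⟨F₀, hF₀⟩
    · simp only [Finset.card_empty, Nat.cast_zero]
      unfold Nprime
      refine Finset.prod_nonneg fun i hi => ?_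
      refine div_nonneg ?_ ?_
      · have := one_le_zpow₀ hq.le (show (0 : ℤ) ≤ 2 * ((ν : ℤ) - m + i) by omega)
        linarith
      · have := one_le_zpow₀ hq.le (show (0 : ℤ) ≤ i by omega)
        linarith
    have hr : LinearMap.IsRefl f := LinearMap.IsAlt.isRefl halt
    have hB : LinearMap.BilinForm.Nondegenerate f :=
      hr.nondegenerate_iff_separatingLeft.2 hnd
    have hSp := LinearMap.BilinForm.finrank_orthogonal hB S
    have hSW : S ≤ LinearMap.BilinForm.orthogonal f S := by
      intro x hx
      rw [LinearMap.BilinForm.mem_orthogonal_iff]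
      intro y hy
      exact (hA F₀ hF₀).1.1 y ((hA F₀ hF₀).2 hy) x ((hA F₀ hF₀).2 hx)
    have hc := aux_count A S (LinearMap.BilinForm.orthogonal f S) m
      (Nprime (Fintype.card K) (finrank K S + 1) m ν) (fun F hF => (hA F hF).2) ?_ ?_
    · rw [inf_eq_left.2 hSW] at hc
      have := aux_ratio _ _ _ _ _ _ hq (Submodule.finrank_mono hSW) (by omega) hc
      rw [aux_Ns _ _ _ _ (by omega) hm]
      have e : finrank K ↥(LinearMap.BilinForm.orthogonal f S) - finrank K S
        = 2 * (ν - finrank K S) := by omega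
      rwa [e] at this
    · intro F hF
      have : F ⊓ LinearMap.BilinForm.orthogonal f S = F := by
        rw [inf_eq_left]
        intro x hx
        rw [LinearMap.BilinForm.mem_orthogonal_iff]
        intro y hy
        exact (hA F hF).1.1 y ((hA F hF).2 hy) x hx
      rw [this, (hA F hF).1.2]
    · intro v hv hvS B hB
      rw [← aux_sup S v hvS]
      refine ih _ B (by rw [aux_sup S v hvS]; omega) fun F hF => ⟨(hA F (hB F hF).1).1, ?_⟩
      refine sup_le (hA F (hB F hF).1).2 ?_
      simpa using (hB F hF).2

theorem aux_ineq (q : ℚ) (hq : 1 < q) (m t k : ℕ) (hk : k < t) (htm : t ≤ m) :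
    (q ^ (m - k) - 1) / (q ^ (t - k) - 1) ≤ (q ^ (m - t + 1) - 1) / (q - 1) := by
  obtain ⟨j, rfl⟩ : ∃ j, t = k + j + 1 := ⟨t - k - 1, by omega⟩
  obtain ⟨n, rfl⟩ : ∃ n, m = k + j + 1 + n := ⟨m - (k + j + 1), by omega⟩
  rw [show k + j + 1 + n - k = n + j + 1 by omega, show k + j + 1 - k = j + 1 by omega,
    show k + j + 1 + n - (k + j + 1) + 1 = n + 1 by omega]
  have h1 : 1 < q ^ (j + 1) := one_lt_pow₀ hq (by omega)
  rw [div_le_div_iff₀ (by linarith) (by linarith)]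
  have h2 : 1 ≤ q ^ n := one_le_pow₀ hq.le
  have h3 : 1 ≤ q ^ j := one_le_pow₀ hq.le
  have h4 : 0 ≤ q * ((q ^ n - 1) * (q ^ j - 1)) :=
    mul_nonneg (by linarith) (mul_nonneg (by linarith) (by linarith))
  have : (q ^ (n + 1) - 1) * (q ^ (j + 1) - 1) - (q ^ (n + j + 1) - 1) * (q - 1)
    = q * ((q ^ n - 1) * (q ^ j - 1)) := by ring
  linarith

theorem stmt_8
    (q ν m₁ m₂ t : ℕ) (hq : IsPrimePow q)
    {K : Type} [Field K] [Fintype K] (hK : Fintype.card K = q)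
    (f : (Fin (2 * ν) → K) →ₗ[K] (Fin (2 * ν) → K) →ₗ[K] K)
    (halt : ∀ v, f v v = 0)
    (hnd : ∀ v, (∀ w, f v w = 0) → v = 0)
    (ht : 0 < t) (hm₁ : t ≤ m₁) (hm₂ : t ≤ m₂) (hm₁ν : m₁ < ν) (hm₂ν : m₂ < ν)
    (hdim : 2 * m₁ + m₂ ≤ 2 * ν + t)
    (ℱ 𝒢 : Set (Submodule K (Fin (2 * ν) → K)))
    (hFne : ℱ.Nonempty) (hGne : 𝒢.Nonempty)
    (hFsub : ℱ ⊆ polar f m₁) (hGsub : 𝒢 ⊆ polar f m₂)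
    (hcross : ∀ F ∈ ℱ, ∀ G ∈ 𝒢, t ≤ finrank K ↥(F ⊓ G)) :
    (ℱ.ncard : ℚ) ≤ gaussBinom q (tauCover f t ℱ) t *
      gaussBinom q (m₂ - t + 1) 1 ^ (tauCover f t 𝒢 - t) *
      Nprime q (tauCover f t 𝒢) m₁ ν := by
  classical
  subst hK
  have hq1 : (1 : ℚ) < Fintype.card K := by exact_mod_cast Fintype.one_lt_card
  have hsymm : ∀ F ∈ ℱ, IsTCover f t 𝒢 F := fun F hF => ⟨(hFsub hF).1, hcross F hF⟩
  have hsymm2 : ∀ G ∈ 𝒢, IsTCover f t ℱ G := fun G hG =>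
    ⟨(hGsub hG).1, fun F hF => by rw [inf_comm]; exact hcross F hF G hG⟩
  obtain ⟨F₀, hF₀⟩ := hFne
  obtain ⟨G₀, hG₀⟩ := hGne
  obtain ⟨X, hX, hXd⟩ : tauCover f t ℱ ∈ {x | ∃ X, IsTCover f t ℱ X ∧ finrank K ↥X = x} :=
    Nat.sInf_mem ⟨_, G₀, hsymm2 G₀ hG₀, rfl⟩
  obtain ⟨Y, hY, hYd⟩ : tauCover f t 𝒢 ∈ {x | ∃ X, IsTCover f t 𝒢 X ∧ finrank K ↥X = x} :=
    Nat.sInf_mem ⟨_, F₀, hsymm F₀ hF₀, rfl⟩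
  have hτF : t ≤ tauCover f t ℱ := by
    rw [← hXd]; exact (hX.2 F₀ hF₀).trans (Submodule.finrank_mono inf_le_left)
  have hτG : t ≤ tauCover f t 𝒢 := by
    rw [← hYd]; exact (hY.2 G₀ hG₀).trans (Submodule.finrank_mono inf_le_left)
  have hτGm : tauCover f t 𝒢 ≤ m₁ := by
    rw [← (hFsub hF₀).2]; exact Nat.sInf_le ⟨F₀, hsymm F₀ hF₀, rfl⟩
  have hmin : ∀ S : Submodule K (Fin (2 * ν) → K), finrank K ↥S < tauCover f t 𝒢 → ¬ IsTCover f t 𝒢 S := fun S hS h =>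
    absurd hS (not_lt.2 (Nat.sInf_le ⟨S, h, rfl⟩))
  have hN := aux_N (K := K) ν m₁ (by simp) hm₁ν.le f halt hnd
  have hg0 : 0 ≤ gaussBinom (Fintype.card K) (m₂ - t + 1) 1 := by
    rw [aux_g1]
    exact div_nonneg (sub_nonneg.2 (one_le_pow₀ hq1.le)) (by linarith)
  have hN0 : 0 ≤ Nprime (Fintype.card K) (tauCover f t 𝒢) m₁ ν := by
    rw [← hYd]
    simpa using hN (m₁ - tauCover f t 𝒢) Y ∅ (by omega) (by simp)
  have stepB : ∀ d, ∀ (S : Submodule K (Fin (2 * ν) → K)) (A : Finset _),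
      finrank K S + d = tauCover f t 𝒢 → (∀ F ∈ A, F ∈ ℱ ∧ S ≤ F) →
      (A.card : ℚ) ≤ gaussBinom (Fintype.card K) (m₂ - t + 1) 1 ^ d *
        Nprime (Fintype.card K) (tauCover f t 𝒢) m₁ ν := by
    intro d
    induction d with
    | zero =>
      intro S A hd hA
      rw [← hd, pow_zero, one_mul]
      exact hN (m₁ - tauCover f t 𝒢) S A (by omega) fun F hF => ⟨hFsub (hA F hF).1, (hA F hF).2⟩
    | succ d ih =>
      intro S A hd hA
      rcases A.eq_empty_or_nonempty with rfl | ⟨F₁, hF₁⟩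
      · simp only [Finset.card_empty, Nat.cast_zero]
        positivity
      have hn := hmin S (by omega)
      have hSi : TotallyIsotropic f S := fun x hx y hy =>
        (hFsub (hA F₁ hF₁).1).1 x ((hA F₁ hF₁).2 hx) y ((hA F₁ hF₁).2 hy)
      obtain ⟨G, hG, hGt⟩ : ∃ G ∈ 𝒢, finrank K ↥(S ⊓ G) < t := by
        by_contra hcon
        push Not at hcon
        exact hn ⟨hSi, hcon⟩
      have hc := aux_count A S G t _ (fun F hF => (hA F hF).2)
        (fun F hF => hcross F (hA F hF).1 G hG) (fun v hv hvS B hB =>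
          ih (S ⊔ K ∙ v) B (by rw [aux_sup S v hvS]; omega) fun F hF =>
            ⟨(hA F (hB F hF).1).1, sup_le (hA F (hB F hF).1).2 (by simpa using (hB F hF).2)⟩)
      rw [(hGsub hG).2] at hc
      refine (aux_ratio _ _ _ _ _ _ hq1 (by omega) hGt hc).trans ?_
      rw [pow_succ', mul_assoc]
      refine mul_le_mul_of_nonneg_right ?_ (by positivity)
      rw [aux_g1]
      exact aux_ineq _ hq1 _ _ _ hGt hm₂
  have stepC : ∀ d, ∀ (S : Submodule K (Fin (2 * ν) → K)) (A : Finset _), S ≤ X →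
      finrank K S + d = t → (∀ F ∈ A, F ∈ ℱ ∧ S ≤ F) →
      (A.card : ℚ) ≤ gaussBinom (Fintype.card K) (tauCover f t ℱ - finrank K S) d *
        (gaussBinom (Fintype.card K) (m₂ - t + 1) 1 ^ (tauCover f t 𝒢 - t) *
        Nprime (Fintype.card K) (tauCover f t 𝒢) m₁ ν) := by
    intro d
    induction d with
    | zero =>
      intro S A hSX hd hA
      have := stepB (tauCover f t 𝒢 - t) S A (by omega) hA
      simpa [gaussBinom] using this
    | succ d ih =>
      intro S A hSX hd hA
      have hc := aux_count A S X t _ (fun F hF => (hA F hF).2)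
        (fun F hF => by rw [inf_comm]; exact hX.2 F (hA F hF).1) (fun v hv hvS B hB => by
          have := ih (S ⊔ K ∙ v) B (sup_le hSX (by simpa using hv))
            (by rw [aux_sup S v hvS]; omega) fun F hF =>
            ⟨(hA F (hB F hF).1).1, sup_le (hA F (hB F hF).1).2 (by simpa using (hB F hF).2)⟩
          rw [aux_sup S v hvS] at this
          exact this)
      rw [hXd, inf_eq_left.2 hSX] at hc
      refine (aux_ratio _ _ _ _ _ _ hq1 (by omega) (by omega) hc).trans ?_
      rw [show tauCover f t ℱ - finrank K S = (tauCover f t ℱ - (finrank K S + 1)) + 1 by omega,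
        aux_gs _ _ d, show t - finrank K S = d + 1 by omega, mul_assoc (_ / _)]
  have hfin : ℱ.Finite := Set.toFinite ℱ
  have := stepC t ⊥ hfin.toFinset bot_le (by simp) (fun F hF => ⟨by simpa using hF, bot_le⟩)
  rw [Set.ncard_eq_toFinset_card ℱ hfin, mul_assoc]
  simpa using this

end
end

section
/- Let q be a prime power and let ν, m₁, m₂, t be positive integers with ν ≥ m₁ ≥ t+1 and ν ≥ m₂ ≥ t+1, and let S ∈ 𝒫_{t+1}. Then |𝒞₃(S;m₁)| = N'(t+1;m₁;2ν) and |𝒞₄(S;m₂,t)| = [t+1 choose 1]_q · N'(t;m₂;2ν) − q·[t choose 1]_q · N'(t+1;m₂;2ν); consequently |𝒞₃(S;m₁)|·|𝒞₄(S;m₂,t)| = N'(t+1;m₁;2ν)·([t+1 choose 1]_q · N'(t;m₂;2ν) − q·[t choose 1]_q · N'(t+1;m₂;2ν)). -/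
open Finset Module

noncomputable section

variable {K V : Type*} [Field K] [AddCommGroup V] [Module K V]

theorem aux_card_sub {K V : Type} [Field K] [Fintype K] [AddCommGroup V] [Module K V] [Fintype V]
    (W : Submodule K V) [DecidablePred (· ∈ W)] :
    (Finset.univ.filter (fun v : V => v ∈ W)).card = Fintype.card K ^ finrank K W := by
  classical
  rw [← Module.card_eq_pow_finrank (K := K) (V := W), Fintype.card_subtype]

theorem aux_card_diff {K V : Type} [Field K] [Fintype K] [AddCommGroup V] [Module K V] [Fintype V]
    (A W : Submodule K V) (h : A ≤ W) [DecidablePred (fun v : V => v ∈ W ∧ v ∉ A)] :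
    ((Finset.univ.filter (fun v : V => v ∈ W ∧ v ∉ A)).card : ℚ) =
      (Fintype.card K : ℚ) ^ finrank K W - (Fintype.card K : ℚ) ^ finrank K A := by
  classical
  have h1 := aux_card_sub W
  have h2 := aux_card_sub A
  have h3 : Finset.univ.filter (fun v : V => v ∈ W ∧ v ∉ A) =
      (Finset.univ.filter (fun v : V => v ∈ W)) \ (Finset.univ.filter (fun v : V => v ∈ A)) := by
    ext v; simp
  have h4 : (Finset.univ.filter (fun v : V => v ∈ A)) ⊆ (Finset.univ.filter (fun v : V => v ∈ W)) := by
    intro v; simp; exact fun x => h x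
  rw [h3, Finset.cast_card_sdiff h4, h1, h2]; push_cast; rfl

def perpSub {K V : Type} [Field K] [AddCommGroup V] [Module K V]
    (f : V →ₗ[K] V →ₗ[K] K) (A : Submodule K V) : Submodule K V :=
  A.dualAnnihilator.comap f

theorem aux_perp_mem {K V : Type} [Field K] [AddCommGroup V] [Module K V]
    (f : V →ₗ[K] V →ₗ[K] K) (A : Submodule K V) (v : V) :
    v ∈ perpSub f A ↔ ∀ x ∈ A, f v x = 0 := by
  simp [perpSub, Submodule.mem_dualAnnihilator]

theorem aux_perp_finrank {K V : Type} [Field K] [AddCommGroup V] [Module K V]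
    [FiniteDimensional K V]
    (f : V →ₗ[K] V →ₗ[K] K) (hnd : ∀ v, (∀ w, f v w = 0) → v = 0) (A : Submodule K V) :
    finrank K A + finrank K (perpSub f A) = finrank K V := by
  have hinj : Function.Injective f := by
    rw [injective_iff_map_eq_zero]
    intro v hv
    exact hnd v (fun w => by rw [hv]; rfl)
  let e : V ≃ₗ[K] Dual K V := LinearEquiv.ofInjectiveOfFinrankEq f hinj (Subspace.dual_finrank_eq).symm
  have : finrank K (perpSub f A) = finrank K A.dualAnnihilator := by
    have h : perpSub f A = A.dualAnnihilator.map (e.symm : Dual K V →ₗ[K] V) := by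
      exact Submodule.comap_equiv_eq_map_symm e _
    rw [h, LinearEquiv.finrank_map_eq]
  rw [this]
  exact Subspace.finrank_add_finrank_dualAnnihilator_eq A

theorem aux_sup_ti {K V : Type} [Field K] [AddCommGroup V] [Module K V]
    (f : V →ₗ[K] V →ₗ[K] K) (halt : ∀ v, f v v = 0) (A : Submodule K V)
    (hA : TotallyIsotropic f A) (v : V) (hv : v ∈ perpSub f A) :
    TotallyIsotropic f (A ⊔ K ∙ v) := by
  rw [aux_perp_mem] at hv
  have hs : ∀ x y, f x y = - f y x := fun x y => by
    have := halt (x + y)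
    simp [halt] at this
    linear_combination this
  intro x hx y hy
  rw [Submodule.mem_sup] at hx hy
  obtain ⟨a, ha, b, hb, rfl⟩ := hx
  obtain ⟨c, hc, d, hd, rfl⟩ := hy
  rw [Submodule.mem_span_singleton] at hb hd
  obtain ⟨r, rfl⟩ := hb
  obtain ⟨s, rfl⟩ := hd
  simp [halt, hv c hc, hA a ha c hc, hs a v, hv a ha]

theorem aux_finrank_sup {K V : Type} [Field K] [AddCommGroup V] [Module K V]
    [FiniteDimensional K V] (A : Submodule K V) (v : V) (hv : v ∉ A) :
    finrank K ↥(A ⊔ K ∙ v) = finrank K A + 1 := by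
  have hv0 : v ≠ 0 := fun h => hv (h ▸ A.zero_mem)
  have h1 := Submodule.finrank_sup_add_finrank_inf_eq A (K ∙ v)
  have h2 : A ⊓ K ∙ v = ⊥ := by
    rw [← disjoint_iff]
    exact (Submodule.disjoint_span_singleton' hv0).2 hv
  rw [h2, finrank_bot, finrank_span_singleton hv0] at h1
  simpa using h1

theorem aux_count_s11 {K V : Type} [Field K] [Fintype K] [AddCommGroup V] [Module K V] [Fintype V]
    (ν m : ℕ) (hV : finrank K V = 2 * ν)
    (f : V →ₗ[K] V →ₗ[K] K) (halt : ∀ v, f v v = 0) (hnd : ∀ v, (∀ w, f v w = 0) → v = 0)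
    (d : ℕ) : ∀ (a : ℕ) (A : Submodule K V), a + d = m → A ∈ polar f a →
      ((C3 f A m).ncard : ℚ) = Nprime (Fintype.card K) a m ν := by
  classical
  have : Finite K := inferInstance
  have hfd : FiniteDimensional K V := Module.Finite.of_finite
  letI : Fintype (Submodule K V) := Fintype.ofFinite _
  have hq1 : (1 : ℚ) < Fintype.card K := by exact_mod_cast Fintype.one_lt_card
  set q := Fintype.card K with hqdef
  induction d with
  | zero =>
    rintro a A ham ⟨hA1, hA2⟩
    have ham' : a = m := by omega
    subst ham'
    have : C3 f A a = {A} := by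
      ext F
      simp only [C3, polar, Set.mem_setOf_eq, Set.mem_singleton_iff]
      constructor
      · rintro ⟨⟨h1, h2⟩, h3⟩
        exact (Submodule.eq_of_le_of_finrank_eq h3 (by rw [hA2, h2])).symm
      · rintro rfl
        exact ⟨⟨hA1, hA2⟩, le_rfl⟩
    rw [this]
    simp [Nprime]
  | succ d ih =>
    rintro a A ham ⟨hA1, hA2⟩
    have key := Finset.sum_card_bipartiteAbove_eq_sum_card_bipartiteBelow
      (s := Finset.univ.filter (fun v : V => v ∈ perpSub f A ∧ v ∉ A))
      (t := Finset.univ.filter (fun F : Submodule K V => F ∈ C3 f A m))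
      (fun v F => v ∈ F)
    have hAp : A ≤ perpSub f A := fun x hx => (aux_perp_mem f A x).2 (fun y hy => hA1 x hx y hy)
    have hp := aux_perp_finrank f hnd A
    have hc := aux_card_diff A _ hAp
    have hL : ∀ v ∈ Finset.univ.filter (fun v : V => v ∈ perpSub f A ∧ v ∉ A),
        (((Finset.univ.filter (fun F : Submodule K V => F ∈ C3 f A m)).bipartiteAbove
          (fun v F => v ∈ F) v).card : ℚ) = Nprime q (a+1) m ν := by
      intro v hv
      simp only [Finset.mem_filter, Finset.mem_univ, true_and] at hv
      rw [← ih (a+1) (A ⊔ K ∙ v) (by omega) ⟨aux_sup_ti f halt A hA1 v hv.1, by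
        rw [aux_finrank_sup A v hv.2, hA2]⟩, Set.ncard_eq_toFinset_card']
      congr 2
      ext F
      rw [Set.mem_toFinset]
      simp only [Finset.bipartiteAbove, Finset.mem_filter, Finset.mem_univ, true_and]
      change (F ∈ polar f m ∧ A ≤ F) ∧ v ∈ F ↔ F ∈ polar f m ∧ A ⊔ K ∙ v ≤ F
      rw [sup_le_iff, Submodule.span_singleton_le_iff_mem, and_assoc]
    have hR : ∀ F ∈ Finset.univ.filter (fun F : Submodule K V => F ∈ C3 f A m),
        (((Finset.univ.filter (fun v : V => v ∈ perpSub f A ∧ v ∉ A)).bipartiteBelow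
          (fun v F => v ∈ F) F).card : ℚ) = (q : ℚ) ^ m - (q : ℚ) ^ a := by
      intro F hF
      simp only [Finset.mem_filter, Finset.mem_univ, true_and] at hF
      obtain ⟨⟨hF1, hF2⟩, hF3⟩ := hF
      have h := aux_card_diff A F hF3
      rw [hF2, hA2] at h
      rw [← h]
      congr 2
      ext v
      simp only [Finset.bipartiteBelow, Finset.mem_filter, Finset.mem_univ, true_and]
      constructor
      · tauto
      · rintro ⟨h1, h2⟩
        exact ⟨⟨(aux_perp_mem f A v).2 (fun x hx => hF1 v h1 x (hF3 hx)), h2⟩, h1⟩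
    have key' : (∑ v ∈ Finset.univ.filter (fun v : V => v ∈ perpSub f A ∧ v ∉ A),
        (((Finset.univ.filter (fun F : Submodule K V => F ∈ C3 f A m)).bipartiteAbove
          (fun v F => v ∈ F) v).card : ℚ)) = 
        ∑ F ∈ Finset.univ.filter (fun F : Submodule K V => F ∈ C3 f A m),
        (((Finset.univ.filter (fun v : V => v ∈ perpSub f A ∧ v ∉ A)).bipartiteBelow
          (fun v F => v ∈ F) F).card : ℚ) := by exact_mod_cast key
    rw [Finset.sum_congr rfl hL, Finset.sum_congr rfl hR, Finset.sum_const, Finset.sum_const,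
      nsmul_eq_mul, nsmul_eq_mul, hc] at key'
    have hn : ((C3 f A m).ncard : ℚ) =
      (Finset.univ.filter (fun F : Submodule K V => F ∈ C3 f A m)).card := by
      rw [Set.ncard_eq_toFinset_card']
      congr 2
      ext F
      simp
    rw [← hn, hA2] at key'
    rw [hA2, hV] at hp
    have hle : a + a ≤ 2 * ν := by
      have := Submodule.finrank_mono hAp
      omega
    have e1 : finrank K (perpSub f A) = a + 2 * (ν - a) := by omega
    have e2 : m = a + (d+1) := by omega
    have e3 : Nprime q a m ν = Nprime q (a+1) m ν *
        (((q:ℚ) ^ (2 * (ν - a)) - 1) / ((q:ℚ)^(d+1) - 1)) := by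
      unfold Nprime
      rw [show m - a = d + 1 by omega, show m - (a+1) = d by omega,
        Finset.prod_Icc_succ_top (by omega)]
      congr 2
      · rw [← zpow_natCast]
        congr 2
        push_cast [show a ≤ ν by omega, e2]
        ring
    rw [e3, mul_div_assoc', eq_div_iff, ]
    · have hqa : (q:ℚ)^a ≠ 0 := by positivity
      apply mul_left_cancel₀ hqa
      rw [e1] at key'
      have e4 : (q:ℚ)^m = q^a * q^(d+1) := by rw [e2, pow_add]
      rw [e4, pow_add] at key'
      linear_combination -key'
    · have := one_lt_pow₀ hq1 (n := d+1) (by omega)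
      linarith

theorem aux_C4 {K V : Type} [Field K] [Fintype K] [AddCommGroup V] [Module K V] [Fintype V]
    (f : V →ₗ[K] V →ₗ[K] K) (m t : ℕ) (S : Submodule K V) (hS : S ∈ polar f (t+1)) (N : ℚ)
    (hN : ∀ T ∈ polar f t, ((C3 f T m).ncard : ℚ) = N) :
    ((Fintype.card K : ℚ) ^ (t+1) - 1) * N =
      ((Fintype.card K : ℚ) - 1) * ((C4 f S m t).ncard - (C3 f S m).ncard)
      + ((Fintype.card K : ℚ) ^ (t+1) - 1) * (C3 f S m).ncard := by
  classical
  have hfd : FiniteDimensional K V := Module.Finite.of_finite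
  letI : Fintype (Submodule K V) := Fintype.ofFinite _
  letI : Fintype (Dual K S) := @Fintype.ofFinite _ (Module.finite_of_finite K)
  set q := Fintype.card K with hqdef
  obtain ⟨hS1, hS2⟩ := hS
  set D := Finset.univ.filter (fun φ : Dual K S => φ ∈ (⊤ : Submodule K (Dual K S)) ∧ φ ∉ (⊥ : Submodule K (Dual K S))) with hD
  have hDc : (D.card : ℚ) = (q:ℚ)^(t+1) - 1 := by
    rw [hD, aux_card_diff _ _ bot_le, finrank_top, Subspace.dual_finrank_eq, hS2]
    simp [hqdef]
  have hker : ∀ φ ∈ D, finrank K (LinearMap.ker φ) = t := by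
    intro φ hφ
    have h0 : φ ≠ 0 := by simpa [hD] using hφ
    have := Module.Dual.finrank_ker_add_one_of_ne_zero h0
    omega
  have key := Finset.sum_card_bipartiteAbove_eq_sum_card_bipartiteBelow
      (s := D) (t := Finset.univ.filter (fun F : Submodule K V => F ∈ polar f m))
      (fun φ F => (LinearMap.ker φ).map S.subtype ≤ F)
  have hL : ∀ φ ∈ D, (((Finset.univ.filter (fun F : Submodule K V => F ∈ polar f m)).bipartiteAbove
      (fun φ F => (LinearMap.ker φ).map S.subtype ≤ F) φ).card : ℚ) = N := by
    intro φ hφ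
    rw [← hN ((LinearMap.ker φ).map S.subtype) ⟨?_, ?_⟩, Set.ncard_eq_toFinset_card']
    · congr 2
      ext F
      rw [Set.mem_toFinset]
      simp only [Finset.bipartiteAbove, Finset.mem_filter, Finset.mem_univ, true_and]
      rfl
    · intro x hx y hy
      exact hS1 x (Submodule.map_subtype_le _ _ hx) y (Submodule.map_subtype_le _ _ hy)
    · rw [Submodule.finrank_map_subtype_eq]
      exact hker φ hφ
  have hR : ∀ F ∈ Finset.univ.filter (fun F : Submodule K V => F ∈ polar f m),
      ((D.bipartiteBelow (fun φ F => (LinearMap.ker φ).map S.subtype ≤ F) F).card : ℚ) =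
       ((q:ℚ) - 1) * ((if F ∈ C4 f S m t then 1 else 0) - (if F ∈ C3 f S m then 1 else 0))
        + ((q:ℚ)^(t+1) - 1) * (if F ∈ C3 f S m then 1 else 0) := by
    intro F hF
    simp only [Finset.mem_filter, Finset.mem_univ, true_and] at hF
    by_cases h3 : S ≤ F
    · have m3 : F ∈ C3 f S m := ⟨hF, h3⟩
      have m4 : F ∈ C4 f S m t := ⟨hF, by rw [inf_eq_right.2 h3, hS2]; omega⟩
      rw [if_pos m3, if_pos m4, ← hDc]
      have : D.bipartiteBelow (fun φ F => (LinearMap.ker φ).map S.subtype ≤ F) F = D := by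
        apply Finset.filter_true_of_mem
        intro φ _
        exact (Submodule.map_subtype_le _ _).trans h3
      rw [this]; ring
    · have m3 : F ∉ C3 f S m := fun h => h3 h.2
      have hlt : finrank K ↥(F ⊓ S) < t + 1 := by
        rw [← hS2]
        exact Submodule.finrank_lt_finrank_of_lt
          (lt_of_le_of_ne inf_le_right (fun h => h3 (inf_eq_right.1 h)))
      have hcm : finrank K (F.comap S.subtype) = finrank K ↥(F ⊓ S) := by
        rw [← Submodule.finrank_map_subtype_eq, Submodule.map_comap_subtype, inf_comm]
      rw [if_neg m3]
      by_cases h4 : t ≤ finrank K ↥(F ⊓ S)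
      · have m4 : F ∈ C4 f S m t := ⟨hF, h4⟩
        rw [if_pos m4]
        have hfr : finrank K ↥(F.comap S.subtype) = t := by omega
        have h := Subspace.finrank_add_finrank_dualAnnihilator_eq (F.comap S.subtype)
        have h1 := aux_card_diff (⊥ : Submodule K (Dual K S)) (F.comap S.subtype).dualAnnihilator bot_le
        rw [show finrank K (F.comap S.subtype).dualAnnihilator = 1 by omega] at h1
        simp only [finrank_bot, pow_zero, pow_one] at h1
        rw [sub_zero, mul_one, mul_zero, add_zero, ← h1]
        congr 2
        ext φ
        simp only [Finset.bipartiteBelow, Finset.mem_filter, Finset.mem_univ, true_and]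
        have hle : (F.comap S.subtype ≤ LinearMap.ker φ) ↔ φ ∈ (F.comap S.subtype).dualAnnihilator := by
          rw [Submodule.mem_dualAnnihilator]; rfl
        rw [← hle, Submodule.map_le_iff_le_comap]
        constructor
        · rintro ⟨hφ, h2⟩
          refine ⟨?_, ?_⟩
          · exact (Submodule.eq_of_le_of_finrank_eq h2 (by rw [hker φ hφ, hfr])).ge
          · exact (Finset.mem_filter.1 hφ).2.2
        · rintro ⟨h2, h5⟩
          have hφ : φ ∈ D := by simpa [hD] using h5
          exact ⟨hφ, (Submodule.eq_of_le_of_finrank_eq h2 (by rw [hker φ hφ, hfr])).ge⟩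
      · have m4 : F ∉ C4 f S m t := fun h => h4 h.2
        rw [if_neg m4]
        have : D.bipartiteBelow (fun φ F => (LinearMap.ker φ).map S.subtype ≤ F) F = ∅ := by
          apply Finset.filter_false_of_mem
          intro φ hφ hle
          rw [Submodule.map_le_iff_le_comap] at hle
          have := Submodule.finrank_mono hle
          rw [hker φ hφ] at this
          omega
        rw [this]; simp
  have key' : (∑ φ ∈ D, (((Finset.univ.filter (fun F : Submodule K V => F ∈ polar f m)).bipartiteAbove
      (fun φ F => (LinearMap.ker φ).map S.subtype ≤ F) φ).card : ℚ)) =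
      ∑ F ∈ Finset.univ.filter (fun F : Submodule K V => F ∈ polar f m),
      ((D.bipartiteBelow (fun φ F => (LinearMap.ker φ).map S.subtype ≤ F) F).card : ℚ) := by
    exact_mod_cast key
  have hcnt : ∀ C : Set (Submodule K V), C ⊆ polar f m → 
      ∑ F ∈ Finset.univ.filter (fun F : Submodule K V => F ∈ polar f m),
        (if F ∈ C then (1:ℚ) else 0) = C.ncard := by
    intro C hC
    rw [Finset.sum_boole, Set.ncard_eq_toFinset_card', Finset.filter_filter]
    congr 2
    ext F
    simp
    exact fun h => hC h
  rw [Finset.sum_congr rfl hL, Finset.sum_congr rfl hR, Finset.sum_const, nsmul_eq_mul, hDc,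
    Finset.sum_add_distrib, ← Finset.mul_sum, ← Finset.mul_sum, Finset.sum_sub_distrib,
    hcnt _ (fun F h => h.1), hcnt _ (fun F h => h.1)] at key'
  exact key'

theorem stmt_11
    (q ν m₁ m₂ t : ℕ) (hq : IsPrimePow q)
    {K : Type} [Field K] [Fintype K] (hK : Fintype.card K = q)
    (f : (Fin (2 * ν) → K) →ₗ[K] (Fin (2 * ν) → K) →ₗ[K] K)
    (halt : ∀ v, f v v = 0)
    (hnd : ∀ v, (∀ w, f v w = 0) → v = 0)
    (ht : 0 < t) (hm₁ : t + 1 ≤ m₁) (hm₂ : t + 1 ≤ m₂) (hm₁ν : m₁ ≤ ν) (hm₂ν : m₂ ≤ ν)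
    (S : Submodule K (Fin (2 * ν) → K)) (hS : S ∈ polar f (t + 1)) :
    ((C3 f S m₁).ncard : ℚ) = Nprime q (t + 1) m₁ ν ∧
    ((C4 f S m₂ t).ncard : ℚ) =
      gaussBinom q (t + 1) 1 * Nprime q t m₂ ν -
        q * gaussBinom q t 1 * Nprime q (t + 1) m₂ ν ∧
    ((C3 f S m₁).ncard : ℚ) * (C4 f S m₂ t).ncard =
      Nprime q (t + 1) m₁ ν *
        (gaussBinom q (t + 1) 1 * Nprime q t m₂ ν -
          q * gaussBinom q t 1 * Nprime q (t + 1) m₂ ν) := by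
  classical
  have hV : finrank K (Fin (2 * ν) → K) = 2 * ν := by simp
  subst hK
  have hq1 : (1 : ℚ) < Fintype.card K := by exact_mod_cast Fintype.one_lt_card
  have h3 : ∀ m, t + 1 ≤ m → ((C3 f S m).ncard : ℚ) = Nprime (Fintype.card K) (t+1) m ν :=
    fun m hm => aux_count_s11 ν m hV f halt hnd (m - (t+1)) (t+1) S (by omega) hS
  have h4 := aux_C4 f m₂ t S hS (Nprime (Fintype.card K) t m₂ ν)
    (fun T hT => aux_count_s11 ν m₂ hV f halt hnd (m₂ - t) t T (by omega) hT)
  have h4' : ((C4 f S m₂ t).ncard : ℚ) =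
      gaussBinom (Fintype.card K) (t + 1) 1 * Nprime (Fintype.card K) t m₂ ν -
        (Fintype.card K) * gaussBinom (Fintype.card K) t 1 * Nprime (Fintype.card K) (t + 1) m₂ ν := by
    rw [h3 m₂ hm₂] at h4
    have g : ∀ n : ℕ, gaussBinom (Fintype.card K) n 1 =
        ((Fintype.card K : ℚ) ^ n - 1) / ((Fintype.card K : ℚ) - 1) := by
      intro n; simp [gaussBinom]
    rw [g, g]
    have hne : (Fintype.card K : ℚ) - 1 ≠ 0 := by linarith
    field_simp
    rw [pow_succ] at h4 ⊢
    linear_combination -h4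
  exact ⟨h3 m₁ hm₁, h4', by rw [h3 m₁ hm₁, h4']⟩


end
end
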